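/- For n ≥ 0, parameter t not equal to q^{-j} for 0 ≤ j ≤ n, and x arbitrary: ∑_{i=0}^n [n choose i]_q (-1)^{i-1} q^{binom(i,2)} · (1/(q^{-i} - t)) · ∑_{m=0}^n ((q^{-i}; q)_m/(q;q)_m)(-xq)^m = -((q;q)_n/(t;q)_{n+1}) ∑_{m=0}^n ((t;q)_m/(q;q)_m)(-xq)^m. -/

import Mathlib

/-!
Put `P(z) = ∑_{m ≤ n} (z;q)_m / (q;q)_m (-xq)^m`, a polynomial in `z` of degree at most `n`.
The identity is the partial fraction expansion of `P(z) / (z;q)_{n+1}` at `z = t`: the poles are the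
`n + 1` distinct points `q^{-i}`, `0 ≤ i ≤ n`, so Lagrange interpolation (`pochSum_interpolation`)
gives `P(t) / (t;q)_{n+1} = ∑_i P(q^{-i}) / ((1 - t q^i) ∏_{j ≠ i} (1 - q^{j-i}))`.
The factors with `j > i` multiply to `(q;q)_{n-i}`, and those with `j < i` to
`(-1)^i q^{-i(i+1)/2} (q;q)_i` (`prod_below_node`); after multiplication by `(q;q)_n` this is the
Gaussian binomial with its sign and power of `q`.
-/

open Finset

/-- The q-Pochhammer symbol `(a;q)_n`. -/
noncomputable def qPoch {K : Type*} [Field K] (q a : K) (n : ℕ) : K :=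
  ∏ k ∈ Finset.range n, (1 - a * q ^ k)

/-- The Gaussian binomial coefficient. -/
noncomputable def qBinom {K : Type*} [Field K] (q : K) (n i : ℕ) : K :=
  qPoch q q n / (qPoch q q i * qPoch q q (n - i))

/-- The sum `∑_{m ≤ n} (z;q)_m c^m / (q;q)_m` as a polynomial in `z`. -/
noncomputable def pochSum {K : Type*} [Field K] (q c : K) (n : ℕ) : Polynomial K :=
  ∑ m ∈ range (n + 1), Polynomial.C (c ^ m / qPoch q q m) *
    ∏ k ∈ range m, (1 - Polynomial.C (q ^ k) * Polynomial.X)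

lemma eval_pochSum {K : Type*} [Field K] (q c z : K) (n : ℕ) :
    (pochSum q c n).eval z = ∑ m ∈ range (n + 1), qPoch q z m / qPoch q q m * c ^ m := by
  simp only [pochSum, Polynomial.eval_finsetSum, Polynomial.eval_mul, Polynomial.eval_C,
    Polynomial.eval_prod, Polynomial.eval_sub, Polynomial.eval_one, Polynomial.eval_X]
  refine Finset.sum_congr rfl fun m _ => ?_
  have h : ∏ k ∈ range m, (1 - q ^ k * z) = qPoch q z m :=
    Finset.prod_congr rfl fun k _ => by ring
  rw [h]
  ring

lemma degree_pochSum_lt {K : Type*} [Field K] (q c : K) (n : ℕ) :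
    (pochSum q c n).degree < ((n + 1 : ℕ) : WithBot ℕ) := by
  rw [← Polynomial.mem_degreeLT]
  refine Submodule.sum_mem _ fun m hm => ?_
  rw [Polynomial.mem_degreeLT]
  have hprod : (∏ k ∈ range m,
      (1 - Polynomial.C (q ^ k) * Polynomial.X : Polynomial K)).natDegree ≤ m := by
    refine (Polynomial.natDegree_prod_le _ _).trans ?_
    calc _ ≤ ∑ _k ∈ range m, 1 := Finset.sum_le_sum fun k _ => by compute_degree
      _ = m := by simp
  refine lt_of_le_of_lt Polynomial.degree_le_natDegree ?_
  have := (Polynomial.natDegree_C_mul_le (c ^ m / qPoch q q m) (∏ k ∈ range m,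
      (1 - Polynomial.C (q ^ k) * Polynomial.X : Polynomial K))).trans hprod
  have hm' := Finset.mem_range.mp hm
  exact_mod_cast lt_of_le_of_lt this hm'

lemma qPoch_self_ne_zero {K : Type*} [Field K] (q : K)
    (hq : ∀ k : ℕ, 0 < k → q ^ k ≠ 1) (m : ℕ) : qPoch q q m ≠ 0 := by
  refine Finset.prod_ne_zero_iff.mpr fun k _ h => hq (k + 1) k.succ_pos ?_
  rw [pow_succ']
  exact (sub_eq_zero.mp h).symm

lemma prod_range_erase {K : Type*} [Field K] (f : ℕ → K) (i d : ℕ) :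
    ∏ j ∈ (range (i + d + 1)).erase i, f j
      = (∏ j ∈ range i, f j) * ∏ k ∈ range d, f (i + 1 + k) := by
  induction d with
  | zero => simp [Finset.range_add_one]
  | succ d ih =>
    have h : (range (i + (d + 1) + 1)).erase i
        = insert (i + d + 1) ((range (i + d + 1)).erase i) := by
      ext j; simp only [Finset.mem_erase, Finset.mem_range, Finset.mem_insert]; omega
    rw [h, Finset.prod_insert (by simp), ih, Finset.prod_range_succ,
      show i + 1 + d = i + d + 1 by ring]
    ring

/-- `∏_{j<i} (1 - q^{j-i}) = (-1)^i q^{-i(i+1)/2} (q;q)_i`, with the power of `q` moved to the left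
and `i(i+1)/2` split as `i(i-1)/2 + i`. -/
lemma prod_below_node {K : Type*} [Field K] (q : K) (hq0 : q ≠ 0) (i : ℕ) :
    (∏ j ∈ range i, (1 - (q ^ i)⁻¹ * q ^ j)) * (q ^ (i.choose 2) * q ^ i)
      = (-1) ^ i * qPoch q q i := by
  have hrefl : ∏ j ∈ range i, (1 - (q ^ i)⁻¹ * q ^ j)
      = ∏ j ∈ range i, (1 - (q ^ (j + 1))⁻¹) := by
    rw [← Finset.prod_range_reflect]
    refine Finset.prod_congr rfl fun j hj => ?_
    have hj := Finset.mem_range.mp hj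
    obtain ⟨d, rfl⟩ : ∃ d, i = d + (j + 1) := ⟨i - (j + 1), by omega⟩
    rw [show d + (j + 1) - 1 - j = d by omega, pow_add]
    field_simp
  rw [hrefl]
  clear hrefl
  induction i with
  | zero => simp [qPoch]
  | succ i ih =>
    have hch : (i + 1).choose 2 = i + i.choose 2 := by
      rw [Nat.choose_succ_succ' i 1, Nat.choose_one_right]
    have hp : qPoch q q (i + 1) = qPoch q q i * (1 - q * q ^ i) := Finset.prod_range_succ _ _
    have hs : (1 - (q ^ (i + 1))⁻¹) * q ^ (i + 1) = -(1 - q * q ^ i) := by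
      rw [sub_mul, inv_mul_cancel₀ (pow_ne_zero _ hq0)]; ring
    rw [Finset.prod_range_succ, hch, hp, pow_add q i]
    linear_combination (1 - (q ^ (i + 1))⁻¹) * q ^ (i + 1) * ih
      + (-1) ^ i * qPoch q q i * hs

/-- Lagrange interpolation of `pochSum` at the nodes `q^{-i}`, `0 ≤ i ≤ n`. -/
lemma pochSum_interpolation {K : Type*} [Field K] (q c t : K) (hq0 : q ≠ 0)
    (hq : ∀ k : ℕ, 0 < k → q ^ k ≠ 1) (n : ℕ) :
    (pochSum q c n).eval t = ∑ i ∈ range (n + 1), (pochSum q c n).eval (q ^ i)⁻¹ *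
      ∏ j ∈ (range (n + 1)).erase i, (1 - t * q ^ j) / (1 - (q ^ i)⁻¹ * q ^ j) := by
  have hlt : ∀ a b : ℕ, a < b → (q ^ a)⁻¹ ≠ (q ^ b)⁻¹ := by
    intro a b hab h
    obtain ⟨d, rfl⟩ := Nat.exists_eq_add_of_lt hab
    have h := inv_injective h
    rw [add_assoc, pow_add] at h
    exact hq (d + 1) d.succ_pos
      (mul_left_cancel₀ (pow_ne_zero a hq0) (by rw [← h, mul_one]))
  have hinj : Function.Injective fun i : ℕ => (q ^ i)⁻¹ := by
    intro a b h
    rcases lt_trichotomy a b with hab | hab | hab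
    · exact absurd h (hlt a b hab)
    · exact hab
    · exact absurd h.symm (hlt b a hab)
  have key := Lagrange.eq_interpolate (s := range (n + 1)) (v := fun i : ℕ => (q ^ i)⁻¹)
    (f := pochSum q c n) hinj.injOn (by simpa using degree_pochSum_lt q c n)
  have key := congrArg (Polynomial.eval t) key
  rw [Lagrange.interpolate_apply, Polynomial.eval_finsetSum] at key
  rw [key]
  refine Finset.sum_congr rfl fun i _ => ?_
  rw [Polynomial.eval_mul, Polynomial.eval_C, Lagrange.basis, Polynomial.eval_prod]
  congr 1
  refine Finset.prod_congr rfl fun j hj => ?_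
  have hne : (q ^ i)⁻¹ - (q ^ j)⁻¹ ≠ 0 :=
    sub_ne_zero.mpr fun h => Finset.ne_of_mem_erase hj (hinj h).symm
  have hqj := pow_ne_zero j hq0
  have hscale : ∀ z : K, 1 - z * q ^ j = (z - (q ^ j)⁻¹) * -q ^ j := by
    intro z; field_simp; ring
  rw [hscale t, hscale, mul_div_mul_right _ _ (neg_ne_zero.mpr hqj)]
  simp only [Lagrange.basisDivisor, Polynomial.eval_mul, Polynomial.eval_C, Polynomial.eval_sub,
    Polynomial.eval_X]
  rw [div_eq_inv_mul]

/-- The residue-evaluation step in the proof of the second Fu–Lascoux identity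
(with the Cauchy series truncated at `m = n`); `(-((-1)^i))` stands for `(-1)^{i-1}`. -/
theorem residue_evaluation_step {K : Type*} [Field K] (q x t : K) (hq0 : q ≠ 0)
    (hq : ∀ k : ℕ, 0 < k → q ^ k ≠ 1) (n : ℕ)
    (ht : ∀ j : ℕ, j ≤ n → t ≠ q ^ (-(j : ℤ))) :
    ∑ i ∈ range (n + 1), qBinom q n i * (-((-1 : K) ^ i)) * q ^ (i.choose 2) *
        (1 / (q ^ (-(i : ℤ)) - t)) *
        ∑ m ∈ range (n + 1), qPoch q (q ^ (-(i : ℤ))) m / qPoch q q m * (-(x * q)) ^ m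
      = -(qPoch q q n / qPoch q t (n + 1)) *
          ∑ m ∈ range (n + 1), qPoch q t m / qPoch q q m * (-(x * q)) ^ m := by
  simp only [← eval_pochSum]
  rw [pochSum_interpolation q _ t hq0 hq n, Finset.mul_sum]
  refine Finset.sum_congr rfl fun i hi => ?_
  rw [zpow_neg, zpow_natCast]
  obtain ⟨d, rfl⟩ : ∃ d, n = i + d :=
    ⟨n - i, by have := Finset.mem_range.mp hi; omega⟩
  have hfac : ∀ j ∈ range (i + d + 1), 1 - t * q ^ j ≠ 0 := by
    intro j hj h
    refine ht j (by have := Finset.mem_range.mp hj; omega) ?_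
    rw [zpow_neg, zpow_natCast]
    exact eq_inv_of_mul_eq_one_left (sub_eq_zero.mp h).symm
  have hE : ∏ j ∈ (range (i + d + 1)).erase i, (1 - t * q ^ j) ≠ 0 :=
    Finset.prod_ne_zero_iff.mpr fun j hj => hfac j (Finset.mem_of_mem_erase hj)
  have hT : qPoch q t (i + d + 1)
      = (1 - t * q ^ i) * ∏ j ∈ (range (i + d + 1)).erase i, (1 - t * q ^ j) :=
    (Finset.mul_prod_erase _ _ hi).symm
  have hup : ∏ k ∈ range d, (1 - (q ^ i)⁻¹ * q ^ (i + 1 + k)) = qPoch q q d := by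
    refine Finset.prod_congr rfl fun k _ => ?_
    rw [pow_add, pow_add]
    field_simp
  have hlow := prod_below_node q hq0 i
  have hi0 := pow_ne_zero i hq0
  have hc0 := pow_ne_zero (i.choose 2) hq0
  have hA := qPoch_self_ne_zero q hq i
  have hB := qPoch_self_ne_zero q hq d
  have hti := hfac i hi
  have hpole : (q ^ i)⁻¹ - t = (1 - t * q ^ i) / q ^ i := by field_simp
  have hlow' : ∏ j ∈ range i, (1 - (q ^ i)⁻¹ * q ^ j)
      = (-1) ^ i * qPoch q q i / (q ^ (i.choose 2) * q ^ i) :=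
    eq_div_of_mul_eq (mul_ne_zero hc0 hi0) hlow
  have hsq : ((-1 : K) ^ i) * (-1) ^ i = 1 := by rw [← mul_pow]; simp
  have hs0 : ((-1 : K) ^ i) ≠ 0 := left_ne_zero_of_mul_eq_one hsq
  rw [Finset.prod_div_distrib, hT, prod_range_erase (fun j => 1 - (q ^ i)⁻¹ * q ^ j), hup,
    hlow', hpole, qBinom, Nat.add_sub_cancel_left]
  generalize ∏ j ∈ (range (i + d + 1)).erase i, (1 - t * q ^ j) = E at *
  generalize (pochSum q (-(x * q)) (i + d)).eval (q ^ i)⁻¹ = P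
  generalize 1 - t * q ^ i = T at *
  generalize (-1 : K) ^ i = s at *
  field_simp
  linear_combination -(qPoch q q (i + d) * P) * hsq
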